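/- For integers a ≥ 1 and n ≥ a + 2, the chromatic symmetric function of the generalized bull K(1^a 2 1^{n−a−2}) satisfies X_{K(1^a 2 1^{n−a−2})} = Σ_{I ⊨ n, i_{−1} ≥ 3, Θ_I^+(a) ≤ 1} ((i_{−1} − 2)/(i_{−1} − 1)) · w_I · e_I + 2 · Σ_{I ⊨ n, Θ_I^+(a) ≥ 2} w_I · e_I + Σ_{J ⊨ n−1, Θ_J^+(a) ≥ 2} w_J · e_{J} · e_1. -/

import Mathlib

/-!
Let `P_m` be the chromatic symmetric function of the path on `m` vertices. Three ingredients give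
the formula.

*Deletion at the triangle.* If `u, v, w` are the vertices of the triangle, then for arbitrary
colors `[u≠v][v≠w][u≠w] = 2[u≠v][v≠w] + [u≠w] - [v≠w] - [u≠v]`. Summing over the colorings that are
proper on the two outer path segments gives (`gbull_sum`)
`X = 2 P_n + e_1 P_{n-1} - P_a P_{n-a} - P_{a+1} P_{n-a-1}`.

*The path formula.* Decomposing path colorings by their first color yields the
Carlitz-Scoville-Vaughan identity `P(z) (E(z) - z E'(z)) = E(z)` (`pathSum_series`). On the other
side, put `Q_m = Σ_{I ⊨ m} ∏ (i_j - 1) e_I`. Splitting off the first part shows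
`Q(z) (E(z) - z E'(z)) = 1` and `Σ_m (Σ_{I ⊨ m} w_I e_I) z^m = E(z) Q(z)`, so
`P_m = Σ_{I ⊨ m} w_I e_I` (`pathSum_eq_compP`).

*The condition on `Θ`.* `Θ_I^+(a) ≤ 1` means that `a` or `a + 1` is a prefix sum of `I`. If both
are, then `I` has a non-initial part `1` and `w_I = 0`. Hence
`Σ_{Θ_I^+(a) ≤ 1} w_I e_I = P_a Q_{n-a} + P_{a+1} Q_{n-a-1}`, and the first sum of the theorem is
`P_a R_{n-a} + P_{a+1} R_{n-a-1}`, where `R_m` is `Q_m` reweighted by its last part. Splitting off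
that last part gives `R_m = 2 Q_m - P_m + e_1 Q_{m-1}` (`compR_eq`). Substituting, the right-hand
side of the theorem collapses to the deletion formula (`compSum_rhs`).

The computations with colorings use finitely many variables. They transfer to power series because
setting `x_i = 0` for `i ≥ N` is an algebra homomorphism (`truncVars`), and these homomorphisms
are jointly injective.
-/

open Finset

/-- Symmetric functions in countably many variables `x_0, x_1, x_2, …`, realized inside
the ring of formal multivariate power series over `ℚ`. -/
abbrev SymF : Type := MvPowerSeries ℕ ℚ

open Classical in
/-- The elementary symmetric function `e_k`: the sum of all squarefree monomials of
degree `k` (so `e_0 = 1`). -/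
noncomputable def esymm (k : ℕ) : SymF :=
  fun d : ℕ →₀ ℕ =>
    if (d.sum fun _ e => e) = k ∧ ∀ i, d i ≤ 1 then (1 : ℚ) else 0

/-- `e_I = e_{i_1} ⋯ e_{i_s}` for a list `I = [i_1, …, i_s]`. -/
noncomputable def esymmProd (I : List ℕ) : SymF := (I.map esymm).prod

open Classical in
/-- The chromatic symmetric function `X_G = Σ_κ ∏_v x_{κ v}`, summed over proper colorings
`κ : V → ℕ`: the coefficient of the monomial with exponent vector `d` is the number of
proper colorings all of whose color fibres have the sizes recorded by `d`. -/
noncomputable def csf {V : Type} [Finite V] (G : SimpleGraph V) : SymF :=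
  fun d : ℕ →₀ ℕ =>
    (({κ : V → ℕ | (∀ v w, G.Adj v w → κ v ≠ κ w) ∧
        ∀ i : ℕ, {v | κ v = i}.ncard = d i}).ncard : ℚ)

/-- `w_I = i_1 ∏_{j ≥ 2} (i_j - 1)`, with `w_ε = 1`. -/
def wC : List ℕ → ℕ
  | [] => 1
  | h :: t => h * (t.map (· - 1)).prod

/-- `σ_I^+(a)`: the smallest prefix sum of `I` that is at least `a`. -/
noncomputable def sigmaPlus (I : List ℕ) (a : ℕ) : ℕ :=
  sInf {m | (∃ k ≤ I.length, (I.take k).sum = m) ∧ a ≤ m}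

/-- `Θ_I^+(a) = σ_I^+(a) - a`. -/
noncomputable def thetaPlus (I : List ℕ) (a : ℕ) : ℕ := sigmaPlus I a - a

/-- The generalized bull `K(1^a 2 1^{n-a-2})` on `n` vertices: the path
`0, 1, …, n-1` together with the extra edge joining vertex `a-1` to vertex `a+1`
(in 1-indexed terms, the path `v_1 ⋯ v_n` with the extra edge `v_a v_{a+2}`,
 inserting a triangle after the first `a` vertices). -/
def gbullG (a n : ℕ) : SimpleGraph (Fin n) :=
  SimpleGraph.fromRel (fun i j =>
    (i : ℕ) + 1 = (j : ℕ) ∨ ((i : ℕ) + 1 = a ∧ (j : ℕ) = a + 1))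

/-! ### Sums over compositions -/

section CompositionSums

variable {M : Type*} [AddCommMonoid M]

/-- The sum of `Φ` over the block lists of all compositions of `n`. -/
def compSum (n : ℕ) (Φ : List ℕ → M) : M := ∑ I : Composition n, Φ I.blocks

/-- The block lists of the compositions of `n`. -/
def compLists (n : ℕ) : Finset (List ℕ) :=
  Finset.univ.map ⟨fun I : Composition n => I.blocks, fun _ _ h => Composition.ext h⟩

lemma mem_compLists {n : ℕ} {l : List ℕ} :
    l ∈ compLists n ↔ (∀ i ∈ l, 0 < i) ∧ l.sum = n := by
  constructor
  · intro h
    obtain ⟨I, -, rfl⟩ := Finset.mem_map.1 h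
    exact ⟨fun i hi => I.blocks_pos hi, I.blocks_sum⟩
  · rintro ⟨h1, h2⟩
    exact Finset.mem_map.2 ⟨⟨l, fun {i} hi => h1 i hi, h2⟩, Finset.mem_univ _, rfl⟩

lemma compSum_eq (n : ℕ) (Φ : List ℕ → M) : compSum n Φ = ∑ l ∈ compLists n, Φ l := by
  rw [compLists, Finset.sum_map]
  rfl

lemma compSum_congr {n : ℕ} {Φ Ψ : List ℕ → M}
    (h : ∀ l : List ℕ, (∀ i ∈ l, 0 < i) → l.sum = n → Φ l = Ψ l) :
    compSum n Φ = compSum n Ψ := by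
  rw [compSum_eq, compSum_eq]
  refine Finset.sum_congr rfl fun l hl => ?_
  rw [mem_compLists] at hl
  exact h l hl.1 hl.2

lemma compSum_zero (Φ : List ℕ → M) : compSum 0 Φ = Φ [] := by
  have : compLists 0 = {[]} := by
    ext l
    rw [mem_compLists, Finset.mem_singleton]
    constructor
    · rintro ⟨h1, h2⟩
      cases l with
      | nil => rfl
      | cons h t =>
        have := h1 h (by simp)
        simp at h2
        omega
    · rintro rfl
      simp
  rw [compSum_eq, this, Finset.sum_singleton]

/-- Splitting a composition of `n + 1` after its first part `i + 1`. -/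
lemma compSum_succ (n : ℕ) (Φ : List ℕ → M) :
    compSum (n + 1) Φ =
      ∑ ij ∈ antidiagonal n, compSum ij.2 (fun l => Φ ((ij.1 + 1) :: l)) := by
  simp_rw [compSum_eq]
  rw [Finset.sum_sigma']
  symm
  refine Finset.sum_nbij' (fun p => (p.1.1 + 1) :: p.2)
    (fun l => ⟨(l.headI - 1, l.tail.sum), l.tail⟩) ?_ ?_ ?_ ?_ ?_
  · rintro ⟨⟨i, j⟩, l⟩ h
    simp only [Finset.mem_sigma, Finset.HasAntidiagonal.mem_antidiagonal, mem_compLists] at h ⊢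
    refine ⟨?_, ?_⟩
    · simpa using h.2.1
    · simp only [List.sum_cons]
      omega
  · intro l h
    rw [mem_compLists] at h
    cases l with
    | nil => simp at h
    | cons k t =>
      have h1 := h.1 k (by simp)
      have h2 := h.2
      simp only [List.sum_cons] at h2
      simp only [Finset.mem_sigma, Finset.HasAntidiagonal.mem_antidiagonal, mem_compLists, List.headI_cons,
        List.tail_cons]
      exact ⟨by omega, fun i hi => h.1 i (by simp [hi]), trivial⟩
  · rintro ⟨⟨i, j⟩, l⟩ h
    simp only [Finset.mem_sigma, Finset.HasAntidiagonal.mem_antidiagonal, mem_compLists] at h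
    simp [h.2.2]
  · intro l h
    rw [mem_compLists] at h
    cases l with
    | nil => simp at h
    | cons k t =>
      have h1 := h.1 k (by simp)
      simp only [List.headI_cons, List.tail_cons, List.cons.injEq, and_true]
      omega
  · intros
    rfl

lemma compSum_reverse (n : ℕ) (Φ : List ℕ → M) :
    compSum n (fun l => Φ l.reverse) = compSum n Φ := by
  simp_rw [compSum_eq]
  refine Finset.sum_nbij' List.reverse List.reverse ?_ ?_ ?_ ?_ ?_
  · intro l h
    simpa [mem_compLists, List.sum_reverse] using h
  · intro l h
    simpa [mem_compLists, List.sum_reverse] using h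
  all_goals simp

/-- `IsPartialSum l a` holds when `a` is the sum of some prefix of `l`; the recursion
reads `l` from the left. -/
def IsPartialSum : List ℕ → ℕ → Prop
  | [], a => a = 0
  | h :: t, a => a = 0 ∨ (h ≤ a ∧ IsPartialSum t (a - h))

lemma isPartialSum_iff (l : List ℕ) (a : ℕ) :
    IsPartialSum l a ↔ ∃ k ≤ l.length, (l.take k).sum = a := by
  induction l generalizing a with
  | nil => simp [IsPartialSum, eq_comm]
  | cons h t ih =>
    rw [IsPartialSum, ih]
    constructor
    · rintro (rfl | ⟨h1, k, hk, h2⟩)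
      · exact ⟨0, by simp⟩
      · refine ⟨k + 1, by simpa using hk, ?_⟩
        simp only [List.take_succ_cons, List.sum_cons]
        omega
    · rintro ⟨k, hk, h2⟩
      cases k with
      | zero => left; simpa using h2.symm
      | succ k =>
        right
        simp only [List.take_succ_cons, List.sum_cons] at h2
        exact ⟨by omega, k, by simpa using hk, by omega⟩

/-- A composition whose prefix sums avoid both `a` and `a + 1` is exactly one with
`Θ_I^+(a) ≥ 2`. -/
lemma two_le_thetaPlus_iff {l : List ℕ} {a : ℕ} (h : a ≤ l.sum) :
    2 ≤ thetaPlus l a ↔ ¬ (IsPartialSum l a ∨ IsPartialSum l (a + 1)) := by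
  have hne : {m | (∃ k ≤ l.length, (l.take k).sum = m) ∧ a ≤ m}.Nonempty :=
    ⟨l.sum, ⟨l.length, le_rfl, by simp⟩, h⟩
  have hmem := Nat.sInf_mem hne
  have hle : ∀ m, IsPartialSum l m → a ≤ m → sigmaPlus l a ≤ m := fun m h1 h2 =>
    Nat.sInf_le ⟨(isPartialSum_iff l m).1 h1, h2⟩
  change _ ∧ a ≤ sigmaPlus l a at hmem
  have hps : IsPartialSum l (sigmaPlus l a) := (isPartialSum_iff _ _).2 hmem.1
  unfold thetaPlus
  constructor
  · rintro h2 (h3 | h3)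
    · have := hle _ h3 le_rfl
      omega
    · have := hle _ h3 (by omega)
      omega
  · intro h2
    by_contra h3
    apply h2
    rcases (by omega : sigmaPlus l a = a ∨ sigmaPlus l a = a + 1) with h4 | h4
    · left; rwa [h4] at hps
    · right; rwa [h4] at hps

lemma prod_pred_eq_zero {l : List ℕ} {a : ℕ} (hl : ∀ i ∈ l, 0 < i)
    (h1 : IsPartialSum l a) (h2 : IsPartialSum l (a + 1)) :
    (l.map (· - 1)).prod = 0 := by
  induction l generalizing a with
  | nil => simp [IsPartialSum] at h2
  | cons h t ih =>
    simp only [IsPartialSum, Nat.add_eq_zero_iff, one_ne_zero, and_false, false_or] at h1 h2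
    have hh := hl h (by simp)
    rcases h1 with rfl | h1
    · have : h = 1 := by omega
      simp [this]
    · have e : a + 1 - h = a - h + 1 := by omega
      rw [e] at h2
      simp [ih (fun i hi => hl i (by simp [hi])) h1.2 h2.2]

/-- Consecutive prefix sums `a, a + 1` with `a ≥ 1` force a non-initial part `1`, which kills
`w_I`. -/
lemma wC_eq_zero {l : List ℕ} {a : ℕ} (ha : 1 ≤ a) (hl : ∀ i ∈ l, 0 < i)
    (h1 : IsPartialSum l a) (h2 : IsPartialSum l (a + 1)) : wC l = 0 := by
  cases l with
  | nil => simp [IsPartialSum] at h2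
  | cons h t =>
    rcases h1 with h1 | h1
    · omega
    rcases h2 with h2 | h2
    · omega
    have e : a + 1 - h = a - h + 1 := by omega
    rw [e] at h2
    simp [wC, prod_pred_eq_zero (fun i hi => hl i (by simp [hi])) h1.2 h2.2]

open Classical in
/-- Compositions of `a + b` having `a` as a prefix sum are concatenations of a composition of `a`
and one of `b`. -/
lemma compSum_split (a b : ℕ) (Φ : List ℕ → M) :
    compSum (a + b) (fun l => if IsPartialSum l a then Φ l else 0) =
      compSum a (fun l => compSum b (fun l' => Φ (l ++ l'))) := by
  induction a using Nat.strong_induction_on generalizing Φ with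
  | _ a ih =>
    cases a with
    | zero =>
      rw [compSum_zero, Nat.zero_add]
      refine compSum_congr fun l _ _ => ?_
      have : IsPartialSum l 0 := by cases l <;> simp [IsPartialSum]
      simp [this]
    | succ a =>
      have e : a + 1 + b = (a + b) + 1 := by omega
      rw [e, compSum_succ, compSum_succ]
      have key : ∀ i j : ℕ, i + j = a →
          compSum (j + b) (fun l => if IsPartialSum ((i + 1) :: l) (a + 1) then
            Φ ((i + 1) :: l) else 0) =
          compSum j (fun l => compSum b (fun l' => Φ ((i + 1) :: l ++ l'))) := by
        intro i j hij
        have := ih j (by omega) (fun l => Φ ((i + 1) :: l))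
        simp only [List.cons_append]
        rw [← this]
        refine compSum_congr fun l _ _ => ?_
        have : IsPartialSum ((i + 1) :: l) (a + 1) ↔ IsPartialSum l j := by
          have e : a + 1 - (i + 1) = j := by omega
          simp only [IsPartialSum, e]
          constructor
          · rintro (h | h)
            · omega
            · exact h.2
          · intro h
            exact Or.inr ⟨by omega, h⟩
        simp only [this]
      rw [Finset.Nat.sum_antidiagonal_eq_sum_range_succ
          (fun i j => compSum j (fun l => if IsPartialSum ((i + 1) :: l) (a + 1) then
            Φ ((i + 1) :: l) else 0)),
        Finset.Nat.sum_antidiagonal_eq_sum_range_succ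
          (fun i j => compSum j (fun l => compSum b (fun l' => Φ ((i + 1) :: l ++ l'))))]
      rw [← Finset.sum_subset (s₁ := Finset.range (a + 1))]
      · refine Finset.sum_congr rfl fun i hi => ?_
        rw [Finset.mem_range] at hi
        rw [← key i (a - i) (by omega), show a - i + b = a + b - i by omega]
      · intro i hi
        simp only [Finset.mem_range] at hi ⊢
        omega
      · intro i hi hi'
        simp only [Finset.mem_range] at hi hi'
        rw [compSum, Finset.sum_eq_zero]
        intro l _
        rw [if_neg]
        simp only [IsPartialSum]
        omega

end CompositionSums

/-! ### Generating functions of weighted compositions -/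

section CompositionAlgebra

open PowerSeries

variable {R : Type*} [CommRing R]

lemma compSum_mul_left (n : ℕ) (c : R) (Φ : List ℕ → R) :
    compSum n (fun l => c * Φ l) = c * compSum n Φ := by
  simp only [compSum, Finset.mul_sum]

lemma compSum_mul_right (n : ℕ) (c : R) (Φ : List ℕ → R) :
    compSum n (fun l => Φ l * c) = compSum n Φ * c := by
  simp only [compSum, Finset.sum_mul]

open Classical in
/-- Since `F` vanishes when `a` and `a + 1` are both prefix sums, restricting to
`Θ_I^+(a) ≤ 1` amounts to adding the two restrictions. -/
lemma compSum_theta_le {n a : ℕ} (h : a ≤ n) {F : List ℕ → R}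
    (hF : ∀ l : List ℕ, (∀ i ∈ l, 0 < i) → IsPartialSum l a → IsPartialSum l (a + 1) → F l = 0) :
    compSum n (fun l => if thetaPlus l a ≤ 1 then F l else 0) =
      compSum n (fun l => if IsPartialSum l a then F l else 0) +
      compSum n (fun l => if IsPartialSum l (a + 1) then F l else 0) := by
  simp_rw [compSum_eq]
  rw [← Finset.sum_add_distrib]
  refine Finset.sum_congr rfl fun l hl => ?_
  rw [mem_compLists] at hl
  have h1 : thetaPlus l a ≤ 1 ↔ (IsPartialSum l a ∨ IsPartialSum l (a + 1)) := by
    have := two_le_thetaPlus_iff (l := l) (a := a) (by omega)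
    rw [← not_iff_not, ← this]
    omega
  simp only [h1]
  by_cases hA : IsPartialSum l a <;> by_cases hB : IsPartialSum l (a + 1)
  · simp [hF l hl.1 hA hB]
  all_goals simp [hA, hB]

lemma compSum_theta_ge (n a : ℕ) (F : List ℕ → R) :
    compSum n (fun l => if 2 ≤ thetaPlus l a then F l else 0) =
      compSum n F - compSum n (fun l => if thetaPlus l a ≤ 1 then F l else 0) := by
  simp_rw [compSum_eq]
  rw [← Finset.sum_sub_distrib]
  refine Finset.sum_congr rfl fun l hl => ?_
  by_cases h : 2 ≤ thetaPlus l a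
  · rw [if_pos h, if_neg (by omega), sub_zero]
  · rw [if_neg h, if_pos (by omega), sub_self]

/-- `E(z) = Σ e_k z^k`. -/
def serE (e : ℕ → R) : R⟦X⟧ := PowerSeries.mk e

lemma serE_eq {e : ℕ → R} (he : e 0 = 1) :
    serE e = 1 + X * PowerSeries.mk (fun k => e (k + 1)) := by
  ext n
  cases n with
  | zero => simp [serE, he]
  | succ n => simp [serE, PowerSeries.coeff_succ_X_mul, PowerSeries.coeff_one]

variable [Algebra ℚ R]

/-- `P_n = Σ_{I ⊨ n} w_I e_I`. -/
def compP (e : ℕ → R) (n : ℕ) : R := compSum n (fun l => (wC l : ℚ) • (l.map e).prod)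

/-- `∏_j (i_j - 1)`: the weight `w_I` without the exceptional first factor. -/
def tailW (l : List ℕ) : ℕ := (l.map (· - 1)).prod

/-- `Q_n = Σ_{I ⊨ n} ∏_j (i_j - 1) e_I`. -/
def compQ (e : ℕ → R) (n : ℕ) : R := compSum n (fun l => (tailW l : ℚ) • (l.map e).prod)

/-- `R_n`: the sum `Q_n` restricted to the compositions with last part at least `3`, each term
reweighted by `(i_{-1} - 2) / (i_{-1} - 1)`. -/
def compR (e : ℕ → R) (n : ℕ) : R := compSum n (fun l => if 3 ≤ l.getLastI then
  ((((l.getLastI : ℚ) - 2) / ((l.getLastI : ℚ) - 1)) * (tailW l : ℚ)) • (l.map e).prod else 0)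

lemma compP_zero (e : ℕ → R) : compP e 0 = 1 := by
  simp [compP, compSum_zero, wC]

lemma compQ_zero (e : ℕ → R) : compQ e 0 = 1 := by
  simp [compQ, compSum_zero, tailW]

lemma compP_succ (e : ℕ → R) (n : ℕ) :
    compP e (n + 1) = ∑ ij ∈ antidiagonal n, (((ij.1 + 1 : ℕ) : ℚ) • e (ij.1 + 1)) *
      compQ e ij.2 := by
  rw [compP, compSum_succ]
  refine Finset.sum_congr rfl fun ij _ => ?_
  rw [compQ, ← compSum_mul_left]
  congr 1
  ext l
  simp only [wC, tailW, List.map_cons, List.prod_cons, Algebra.smul_def, map_mul, Nat.cast_mul]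
  ring

lemma compQ_succ (e : ℕ → R) (n : ℕ) :
    compQ e (n + 1) = ∑ ij ∈ antidiagonal n, ((ij.1 : ℚ) • e (ij.1 + 1)) *
      compQ e ij.2 := by
  conv_lhs => rw [compQ, compSum_succ]
  refine Finset.sum_congr rfl fun ij _ => ?_
  rw [compQ, ← compSum_mul_left]
  congr 1
  ext l
  simp only [tailW, List.map_cons, List.prod_cons, Algebra.smul_def, map_mul, Nat.cast_mul,
    Nat.add_sub_cancel]
  ring

lemma tailW_append (l l' : List ℕ) : tailW (l ++ l') = tailW l * tailW l' := by
  simp [tailW]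

lemma getLastI_append {l l' : List ℕ} (h : l' ≠ []) :
    (l ++ l').getLastI = l'.getLastI := by
  rw [List.getLastI_eq_getLast?_getD, List.getLastI_eq_getLast?_getD,
    List.getLast?_append_of_ne_nil _ h]

/-- Splitting off the last part `i + 1`: its reweighted factor is `i - 1`, except that the
value `-1` at `i = 0` is replaced by `0`, whence the correction term `e_1`. -/
lemma compR_succ (e : ℕ → R) (n : ℕ) :
    compR e (n + 1) = ∑ ij ∈ antidiagonal n,
      ((ij.1 : ℚ) • e (ij.1 + 1) - e (ij.1 + 1) + (if ij.1 = 0 then e 1 else 0)) *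
      compQ e ij.2 := by
  rw [compR, ← compSum_reverse, compSum_succ]
  refine Finset.sum_congr rfl fun ij _ => ?_
  rw [compQ, ← compSum_mul_left, ← compSum_reverse]
  congr 1
  ext l
  have hl : ((ij.1 + 1) :: l.reverse).reverse.getLastI = ij.1 + 1 := by
    rw [List.reverse_cons, getLastI_append (by simp)]
    rfl
  have h2 : tailW ((ij.1 + 1) :: l.reverse).reverse = ij.1 * tailW l := by
    simp [tailW, mul_comm]
  have h3 : (List.map e ((ij.1 + 1) :: l.reverse).reverse).prod =
      e (ij.1 + 1) * (l.map e).prod := by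
    simp [mul_comm]
  rw [hl, h2, h3]
  obtain ⟨i, j⟩ := ij
  simp only
  rcases i with _ | _ | i
  · simp
  · simp
  · rw [if_pos (by omega), if_neg (by omega)]
    have : ((((i + 1 + 1 + 1 : ℕ) : ℚ) - 2) / (((i + 1 + 1 + 1 : ℕ) : ℚ) - 1) *
        (((i + 1 + 1) * tailW l : ℕ) : ℚ)) = (((i + 1 + 1 : ℕ) : ℚ) - 1) * (tailW l : ℚ) := by
      have h0 : (i : ℚ) + 1 + 1 ≠ 0 := by positivity
      push_cast
      rw [show (i : ℚ) + 1 + 1 + 1 - 1 = i + 1 + 1 by ring]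
      field_simp
      ring
    rw [this]
    simp only [Algebra.smul_def, map_mul, map_sub, map_one]
    ring

/-- `z E'(z) = Σ k e_k z^k`. -/
def serD (e : ℕ → R) : R⟦X⟧ := PowerSeries.mk (fun k => (k : ℚ) • e k)

lemma serD_eq (e : ℕ → R) :
    serD e = X * PowerSeries.mk (fun k => ((k + 1 : ℕ) : ℚ) • e (k + 1)) := by
  ext n
  cases n with
  | zero => simp [serD]
  | succ n => simp [serD, PowerSeries.coeff_succ_X_mul]

lemma mk_compP (e : ℕ → R) :
    PowerSeries.mk (compP e) = 1 + serD e * PowerSeries.mk (compQ e) := by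
  ext n
  cases n with
  | zero => simp [compP_zero, serD_eq]
  | succ n =>
    rw [serD_eq, mul_assoc, map_add, PowerSeries.coeff_succ_X_mul]
    simp [PowerSeries.coeff_one, compP_succ, PowerSeries.coeff_mul]

/-- `Q(z) (E(z) - z E'(z)) = 1`. -/
lemma mk_compQ {e : ℕ → R} (he : e 0 = 1) :
    PowerSeries.mk (compQ e) * (serE e - serD e) = 1 := by
  have h : PowerSeries.mk (compQ e) = 1 + X * (PowerSeries.mk (fun k => (k : ℚ) • e (k + 1)) *
      PowerSeries.mk (compQ e)) := by
    ext n
    cases n with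
    | zero => simp [compQ_zero]
    | succ n =>
      rw [map_add, PowerSeries.coeff_succ_X_mul]
      simp [PowerSeries.coeff_one, compQ_succ, PowerSeries.coeff_mul]
  have h2 : PowerSeries.mk (fun k => ((k + 1 : ℕ) : ℚ) • e (k + 1)) =
      PowerSeries.mk (fun k => (k : ℚ) • e (k + 1)) + PowerSeries.mk (fun k => e (k + 1)) := by
    ext n
    simp [add_smul]
  rw [serE_eq he, serD_eq, h2]
  linear_combination h

/-- `P(z) = E(z) Q(z)`. -/
lemma mk_compP_eq {e : ℕ → R} (he : e 0 = 1) :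
    PowerSeries.mk (compP e) = serE e * PowerSeries.mk (compQ e) := by
  rw [mk_compP]
  linear_combination - mk_compQ he

/-- `R_m = 2 Q_m - P_m + e_1 Q_{m-1}` for `m ≥ 1`. -/
lemma compR_eq {e : ℕ → R} (he : e 0 = 1) (m : ℕ) :
    compR e (m + 1) = 2 * compQ e (m + 1) - compP e (m + 1) + e 1 * compQ e m := by
  have h : PowerSeries.mk (fun m => compR e (m + 1)) =
      (PowerSeries.mk (fun k => (k : ℚ) • e (k + 1)) - PowerSeries.mk (fun k => e (k + 1)) +
        C (e 1)) * PowerSeries.mk (compQ e) := by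
    ext n
    rw [PowerSeries.coeff_mul, PowerSeries.coeff_mk, compR_succ]
    refine Finset.sum_congr rfl fun ij _ => ?_
    simp only [map_add, map_sub, PowerSeries.coeff_mk, PowerSeries.coeff_C]
  have h2 : PowerSeries.mk (fun k => ((k + 1 : ℕ) : ℚ) • e (k + 1)) =
      PowerSeries.mk (fun k => (k : ℚ) • e (k + 1)) + PowerSeries.mk (fun k => e (k + 1)) := by
    ext n
    simp [add_smul]
  have hX : X * PowerSeries.mk (fun m => compR e (m + 1)) =
      2 * PowerSeries.mk (compQ e) - 1 - PowerSeries.mk (compP e) +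
        C (e 1) * (X * PowerSeries.mk (compQ e)) := by
    have h3 := mk_compQ he
    have h4 := mk_compP e
    have h5 := serD_eq e
    have h6 := serE_eq he
    rw [h2] at h5
    rw [h]
    rw [h6, h5] at h3
    rw [h5] at h4
    linear_combination h4 - 2 * h3
  have := congrArg (PowerSeries.coeff (m + 1)) hX
  simpa [PowerSeries.coeff_succ_X_mul, PowerSeries.coeff_one, two_mul] using this

open Classical in
/-- For `a ≥ 1`, only the parts before the cut at `a` see the exceptional first factor of `w_I`,
so the sum over compositions cut at `a` is `P_a Q_b`. -/
lemma compSum_prefix_P (e : ℕ → R) {a b : ℕ} (ha : 1 ≤ a) :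
    compSum (a + b) (fun l => if IsPartialSum l a then (wC l : ℚ) • (l.map e).prod else 0) =
      compP e a * compQ e b := by
  rw [compSum_split a b (fun l => (wC l : ℚ) • (l.map e).prod), compP, ← compSum_mul_right]
  refine compSum_congr fun l _ hl => ?_
  rw [compQ, ← compSum_mul_left]
  refine compSum_congr fun l' _ _ => ?_
  cases l with
  | nil => simp at hl; omega
  | cons h t =>
    have : wC (h :: t ++ l') = wC (h :: t) * tailW l' := by
      simp [wC, tailW, mul_assoc]
    simp only [this, List.map_append, List.prod_append, Nat.cast_mul, Algebra.smul_def, map_mul]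
    ring

/-- The summand of the first sum of the theorem, without the condition on `Θ_I^+(a)`. -/
def lastTerm (e : ℕ → R) (l : List ℕ) : R := if 3 ≤ l.getLastI then
  ((((l.getLastI : ℚ) - 2) / ((l.getLastI : ℚ) - 1)) * (wC l : ℚ)) • (l.map e).prod else 0

open Classical in
lemma compSum_prefix_R (e : ℕ → R) {a b : ℕ} (ha : 1 ≤ a) (hb : 1 ≤ b) :
    compSum (a + b) (fun l => if IsPartialSum l a then lastTerm e l else 0) =
      compP e a * compR e b := by
  rw [compSum_split a b (lastTerm e), compP, ← compSum_mul_right]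
  refine compSum_congr fun l _ hl => ?_
  rw [compR, ← compSum_mul_left]
  refine compSum_congr fun l' _ hl' => ?_
  have hne : l' ≠ [] := by
    rintro rfl
    simp at hl'
    omega
  rw [lastTerm, getLastI_append hne]
  cases l with
  | nil => simp at hl; omega
  | cons h t =>
    have : wC (h :: t ++ l') = wC (h :: t) * tailW l' := by
      simp [wC, tailW, mul_assoc]
    rw [this]
    split_ifs
    · simp only [List.map_append, List.prod_append, Nat.cast_mul, Algebra.smul_def, map_mul]
      ring
    · simp

/-- The right-hand side of the theorem in terms of the sums `P_m`. -/
lemma compSum_rhs {e : ℕ → R} (he : e 0 = 1) {a c : ℕ} (ha : 1 ≤ a) :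
    compSum (a + 1 + (c + 1)) (fun l => if thetaPlus l a ≤ 1 then lastTerm e l else 0) +
      (2 : ℚ) • compSum (a + 1 + (c + 1)) (fun l => if 2 ≤ thetaPlus l a then
        (wC l : ℚ) • (l.map e).prod else 0) +
      compSum (a + 1 + c) (fun l => if 2 ≤ thetaPlus l a then
        (wC l : ℚ) • (l.map e).prod else 0) * e 1 =
    2 * compP e (a + 1 + (c + 1)) + e 1 * compP e (a + 1 + c) -
      compP e a * compP e (c + 1 + 1) - compP e (a + 1) * compP e (c + 1) := by
  classical
  have hW : ∀ l : List ℕ, (∀ i ∈ l, 0 < i) → IsPartialSum l a → IsPartialSum l (a + 1) →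
      (wC l : ℚ) • (l.map e).prod = 0 := fun l h h1 h2 => by
    simp [wC_eq_zero ha h h1 h2]
  have hL : ∀ l : List ℕ, (∀ i ∈ l, 0 < i) → IsPartialSum l a → IsPartialSum l (a + 1) →
      lastTerm e l = 0 := fun l h h1 h2 => by
    simp [lastTerm, wC_eq_zero ha h h1 h2]
  rw [compSum_theta_ge, compSum_theta_ge, compSum_theta_le (by omega) hL,
    compSum_theta_le (by omega) hW, compSum_theta_le (by omega) hW,
    compSum_prefix_P e (by omega), compSum_prefix_P e (by omega), compSum_prefix_R e (by omega)
    (by omega)]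
  rw [show a + 1 + (c + 1) = a + (c + 1 + 1) by omega, compSum_prefix_P e ha,
    compSum_prefix_R e ha (by omega), show a + 1 + c = a + (c + 1) by omega,
    compSum_prefix_P e ha, compR_eq he, compR_eq he]
  rw [← compP, ← compP, two_smul]
  ring

end CompositionAlgebra

/-! ### Colorings with finitely many colors -/

section Colorings

open PowerSeries

variable {ι : Type*} {R : Type*} [CommRing R]

/-- Proper colorings of the path `0, 1, …, n - 1`. -/
def IsPathColoring {n : ℕ} (κ : Fin n → ι) : Prop :=
  ∀ (t : ℕ) (h : t + 1 < n), κ ⟨t, by omega⟩ ≠ κ ⟨t + 1, h⟩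

/-- The monomial `∏_v x_{κ v}` of a coloring. -/
def colorWt {V : Type*} [Fintype V] (x : ι → R) (κ : V → ι) : R := ∏ v, x (κ v)

lemma isPathColoring_cons {m : ℕ} (j : ι) (g : Fin (m + 1) → ι) :
    IsPathColoring (Fin.cons j g : Fin (m + 2) → ι) ↔ j ≠ g 0 ∧ IsPathColoring g := by
  constructor
  · intro h
    refine ⟨h 0 (Nat.succ_lt_succ m.succ_pos), fun t ht => h (t + 1) (Nat.succ_lt_succ ht)⟩
  · rintro ⟨h1, h2⟩ t ht
    cases t with
    | zero => exact h1
    | succ t => exact h2 t (by omega)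

lemma append_lt {p q : ℕ} (f : Fin p → ι) (g : Fin q → ι) (t : ℕ) (h : t < p) (h' : t < p + q) :
    Fin.append f g ⟨t, h'⟩ = f ⟨t, h⟩ := Fin.append_left f g ⟨t, h⟩

lemma append_ge {p q : ℕ} (f : Fin p → ι) (g : Fin q → ι) (t : ℕ) (h : t < q)
    (h' : p + t < p + q) :
    Fin.append f g ⟨p + t, h'⟩ = g ⟨t, h⟩ := Fin.append_right f g ⟨t, h⟩

lemma isPathColoring_append {p q : ℕ} (f : Fin (p + 1) → ι) (g : Fin (q + 1) → ι) :
    IsPathColoring (Fin.append f g) ↔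
      IsPathColoring f ∧ IsPathColoring g ∧ f (Fin.last p) ≠ g 0 := by
  constructor
  · intro h
    refine ⟨fun t ht => ?_, fun t ht => ?_, ?_⟩
    · have := h t (by omega)
      rwa [append_lt _ _ _ (by omega), append_lt _ _ _ ht] at this
    · have := h (p + 1 + t) (by omega)
      simp only [add_assoc (p + 1)] at this
      rwa [append_ge _ _ _ (by omega), append_ge _ _ _ ht] at this
    · have := h p (by omega)
      rwa [append_lt _ _ _ (by omega), append_ge f g 0 (by omega) (by omega)] at this
  · rintro ⟨h1, h2, h3⟩ t ht
    rcases lt_trichotomy t p with h | rfl | h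
    · rw [append_lt _ _ _ (by omega), append_lt _ _ _ (by omega)]
      exact h1 t (by omega)
    · rw [append_lt _ _ _ (by omega), append_ge f g 0 (by omega) (by omega)]
      exact h3
    · obtain ⟨s, rfl⟩ : ∃ s, t = p + 1 + s := ⟨t - (p + 1), by omega⟩
      simp only [add_assoc (p + 1)]
      rw [append_ge _ _ _ (by omega), append_ge _ _ _ (by omega)]
      exact h2 s (by omega)

lemma isPathColoring_fin_one (f : Fin 1 → ι) : IsPathColoring f := fun t h => by omega

lemma colorWt_cons (x : ι → R) {m : ℕ} (j : ι) (g : Fin m → ι) :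
    colorWt x (Fin.cons j g : Fin (m + 1) → ι) = x j * colorWt x g := by
  simp [colorWt, Fin.prod_univ_succ]

lemma colorWt_append (x : ι → R) {p q : ℕ} (f : Fin p → ι) (g : Fin q → ι) :
    colorWt x (Fin.append f g) = colorWt x f * colorWt x g := by
  simp [colorWt, Fin.prod_univ_add]

variable [Fintype ι]

lemma sum_fin_cons {m : ℕ} (F : (Fin (m + 1) → ι) → R) :
    ∑ κ, F κ = ∑ j, ∑ g : Fin m → ι, F (Fin.cons j g) := by
  rw [← Fintype.sum_prod_type']
  exact (Fintype.sum_equiv (Fin.consEquiv fun _ => ι) _ _ fun _ => rfl).symm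

lemma sum_fin_append {p q : ℕ} (F : (Fin (p + q) → ι) → R) :
    ∑ κ, F κ = ∑ f : Fin p → ι, ∑ g : Fin q → ι, F (Fin.append f g) := by
  rw [← Fintype.sum_prod_type']
  exact (Fintype.sum_equiv (Fin.appendEquiv p q) _ _ fun _ => rfl).symm

open Classical in
/-- The chromatic symmetric function of the path on `n` vertices, in the variables `x`. -/
noncomputable def pathSum (x : ι → R) (n : ℕ) : R :=
  ∑ κ : Fin n → ι, if IsPathColoring κ then colorWt x κ else 0

open Classical in
/-- The part of `pathSum x (n + 1)` coming from the colorings with first color `i`. -/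
noncomputable def pathSumFrom (x : ι → R) (n : ℕ) (i : ι) : R :=
  ∑ κ : Fin n → ι, if IsPathColoring (Fin.cons i κ : Fin (n + 1) → ι) then
    x i * colorWt x κ else 0

lemma pathSum_zero (x : ι → R) : pathSum x 0 = 1 := by
  simp [pathSum, IsPathColoring, colorWt]

lemma pathSum_succ (x : ι → R) (n : ℕ) : pathSum x (n + 1) = ∑ i, pathSumFrom x n i := by
  simp only [pathSum, sum_fin_cons, pathSumFrom, colorWt_cons]

lemma pathSumFrom_zero (x : ι → R) (i : ι) : pathSumFrom x 0 i = x i := by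
  simp [pathSumFrom, isPathColoring_fin_one, colorWt]

/-- Prepending the color `i` to a path coloring fails to be proper exactly when that coloring
already starts with `i`. -/
lemma pathSumFrom_succ (x : ι → R) (n : ℕ) (i : ι) :
    pathSumFrom x (n + 1) i + x i * pathSumFrom x n i = x i * pathSum x (n + 1) := by
  classical
  have h : x i * pathSumFrom x n i =
      ∑ j, if i = j then x i * pathSumFrom x n j else 0 := by simp
  rw [h, pathSum_succ, pathSumFrom, sum_fin_cons, ← Finset.sum_add_distrib, Finset.mul_sum]
  refine Finset.sum_congr rfl fun j _ => ?_
  by_cases hij : i = j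
  · simp [isPathColoring_cons, hij]
  · simp only [isPathColoring_cons, Fin.cons_zero, ne_eq, hij, not_false_eq_true, true_and,
      if_false, add_zero, pathSumFrom, Finset.mul_sum, colorWt_cons, mul_ite, mul_zero]

/-- The elementary symmetric polynomial `e_k` in the variables `x`. -/
def finE (x : ι → R) (k : ℕ) : R := ∑ s ∈ Finset.powersetCard k Finset.univ, ∏ i ∈ s, x i

lemma finE_zero (x : ι → R) : finE x 0 = 1 := by simp [finE]

/-- `E(z) = ∏ (1 + x_i z)`. -/
lemma serE_finE (x : ι → R) :
    serE (finE x) = ∏ i, (1 + C (x i) * X) := by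
  classical
  ext k
  have h : ∀ s : Finset ι, ∏ i ∈ s, (C (x i) * (X : R⟦X⟧)) = C (∏ i ∈ s, x i) * X ^ s.card :=
    fun s => by rw [Finset.prod_mul_distrib, Finset.prod_const, map_prod]
  simp only [serE, PowerSeries.coeff_mk, Finset.prod_one_add, h, map_sum, PowerSeries.coeff_C_mul,
    PowerSeries.coeff_X_pow, finE, mul_ite, mul_one, mul_zero]
  rw [← Finset.sum_filter]
  refine Finset.sum_congr ?_ fun _ _ => rfl
  ext s
  simp [Finset.mem_powersetCard, eq_comm]

omit [Fintype ι] in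
lemma derivative_prod_linear [DecidableEq ι] (x : ι → R) (s : Finset ι) :
    PowerSeries.derivative R (∏ i ∈ s, (1 + C (x i) * X)) =
      ∑ i ∈ s, C (x i) * ∏ j ∈ s.erase i, (1 + C (x j) * X) := by
  induction s using Finset.induction_on with
  | empty => simp
  | insert a s ha ih =>
    rw [Finset.prod_insert ha, Derivation.leibniz, ih, Finset.sum_insert ha,
      Finset.erase_insert ha, add_comm]
    congr 1
    · simp [Derivation.leibniz, mul_comm]
    · rw [smul_eq_mul, Finset.mul_sum]
      refine Finset.sum_congr rfl fun i hi => ?_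
      have hia : a ≠ i := fun h => ha (h ▸ hi)
      rw [Finset.erase_insert_of_ne hia, Finset.prod_insert (by simp [ha])]
      ring

variable [Algebra ℚ R]

/-- Logarithmic differentiation of `E(z) = ∏ (1 + x_i z)`. -/
lemma serD_finE [DecidableEq ι] (x : ι → R) :
    serD (finE x) = X * ∑ i, C (x i) * ∏ j ∈ Finset.univ.erase i, (1 + C (x j) * X) := by
  have h : serD (finE x) = X * PowerSeries.derivative R (serE (finE x)) := by
    rw [serD_eq]
    congr 1
    ext n
    simp [serE, PowerSeries.coeff_derivative, Algebra.smul_def, mul_comm]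
  rw [h, serE_finE, derivative_prod_linear]

/-- The Carlitz–Scoville–Vaughan identity: `P(z) (E(z) - z E'(z)) = E(z)`. -/
lemma pathSum_series (x : ι → R) :
    PowerSeries.mk (pathSum x) * (serE (finE x) - serD (finE x)) = serE (finE x) := by
  classical
  have h1 : ∀ i, PowerSeries.mk (fun n => pathSumFrom x n i) * (1 + C (x i) * X) =
      C (x i) * PowerSeries.mk (pathSum x) := by
    intro i
    ext n
    cases n with
    | zero => simp [pathSumFrom_zero, pathSum_zero]
    | succ n =>
      rw [show PowerSeries.mk (fun n => pathSumFrom x n i) * (1 + C (x i) * X) =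
        PowerSeries.mk (fun n => pathSumFrom x n i) +
          C (x i) * (X * PowerSeries.mk (fun n => pathSumFrom x n i)) by ring]
      rw [map_add, PowerSeries.coeff_C_mul, PowerSeries.coeff_C_mul,
        PowerSeries.coeff_succ_X_mul]
      simpa using pathSumFrom_succ x n i
  have h2 : PowerSeries.mk (pathSum x) =
      1 + X * ∑ i, PowerSeries.mk (fun n => pathSumFrom x n i) := by
    ext n
    cases n with
    | zero => simp [pathSum_zero]
    | succ n =>
      rw [map_add, PowerSeries.coeff_succ_X_mul]
      simp [PowerSeries.coeff_one, pathSum_succ]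
  have h3 : (∑ i, PowerSeries.mk (fun n => pathSumFrom x n i)) * serE (finE x) =
      (∑ i, C (x i) * ∏ j ∈ Finset.univ.erase i, (1 + C (x j) * X)) *
        PowerSeries.mk (pathSum x) := by
    rw [Finset.sum_mul, Finset.sum_mul]
    refine Finset.sum_congr rfl fun i _ => ?_
    rw [serE_finE, ← Finset.mul_prod_erase _ _ (Finset.mem_univ i), ← mul_assoc, h1]
    ring
  rw [serD_finE]
  linear_combination serE (finE x) * h2 + X * h3

/-- `X_{P_n} = Σ_{I ⊨ n} w_I e_I`. -/
lemma pathSum_eq_compP (x : ι → R) (n : ℕ) : pathSum x n = compP (finE x) n := by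
  have h := pathSum_series x
  have hQ := mk_compQ (finE_zero x)
  have hP := mk_compP_eq (finE_zero x)
  have : PowerSeries.mk (pathSum x) = PowerSeries.mk (compP (finE x)) := by
    linear_combination PowerSeries.mk (compQ (finE x)) * h - PowerSeries.mk (pathSum x) * hQ - hP
  simpa using congrArg (PowerSeries.coeff n) this

omit [Algebra ℚ R]

omit [Fintype ι] in
/-- A proper coloring of the generalized bull consists of path colorings `f` of the first
`b + 1` vertices and `g` of the last `m + 1`, together with a color `j` of the vertex in between,
such that the triangle's three colors are distinct. -/
lemma gbull_proper_iff (b m : ℕ) (f : Fin (b + 1) → ι) (j : ι) (g : Fin (m + 1) → ι) :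
    (∀ v w, (gbullG (b + 1) (b + 1 + (m + 2))).Adj v w →
      Fin.append f (Fin.cons j g : Fin (m + 2) → ι) v ≠
        Fin.append f (Fin.cons j g : Fin (m + 2) → ι) w) ↔
    IsPathColoring f ∧ IsPathColoring g ∧ f (Fin.last b) ≠ j ∧ j ≠ g 0 ∧
      f (Fin.last b) ≠ g 0 := by
  have hp : ∀ κ : Fin (b + 1 + (m + 2)) → ι,
      (∀ v w, (gbullG (b + 1) (b + 1 + (m + 2))).Adj v w → κ v ≠ κ w) ↔
      IsPathColoring κ ∧ κ ⟨b, by omega⟩ ≠ κ ⟨b + 1 + 1, by omega⟩ := by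
    intro κ
    constructor
    · intro h
      refine ⟨fun t ht => h _ _ ?_, h _ _ ?_⟩
      · simp [gbullG]
      · simp [gbullG]
        omega
    · rintro ⟨h1, h2⟩ ⟨v, hv⟩ ⟨w, hw⟩ hvw
      simp only [gbullG, SimpleGraph.fromRel_adj] at hvw
      rcases hvw with ⟨-, (h | ⟨h, h'⟩) | (h | ⟨h, h'⟩)⟩
      · subst h
        exact h1 v hw
      · obtain rfl : v = b := by omega
        subst h'
        exact h2
      · subst h
        exact (h1 w hv).symm
      · obtain rfl : w = b := by omega
        subst h'
        exact h2.symm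
  rw [hp, isPathColoring_append, isPathColoring_cons, append_lt _ _ _ (by omega),
    append_ge f _ 1 (by omega) (by omega)]
  simp only [Fin.cons_zero]
  have : (Fin.cons j g : Fin (m + 2) → ι) ⟨1, by omega⟩ = g 0 := rfl
  rw [this]
  change _ ∧ f (Fin.last b) ≠ g 0 ↔ _
  tauto

open Classical in
/-- Deletion relation at the triangle `u, v, w`: pointwise on the colors,
`[u≠v][v≠w][u≠w] = 2[u≠v][v≠w] + [u≠w] - [v≠w] - [u≠v]`. -/
lemma gbull_sum (x : ι → R) (b m : ℕ) :
    (∑ κ : Fin (b + 1 + (m + 2)) → ι,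
      if (∀ v w, (gbullG (b + 1) (b + 1 + (m + 2))).Adj v w → κ v ≠ κ w) then
        colorWt x κ else 0) =
    2 * pathSum x (b + 1 + (m + 2)) + (∑ j, x j) * pathSum x (b + 1 + (m + 1)) -
      pathSum x (b + 1) * pathSum x (m + 2) - pathSum x (b + 1 + 1) * pathSum x (m + 1) := by
  have e1 : (∑ κ : Fin (b + 1 + (m + 2)) → ι,
      if (∀ v w, (gbullG (b + 1) (b + 1 + (m + 2))).Adj v w → κ v ≠ κ w) then
        colorWt x κ else 0) = ∑ f : Fin (b + 1) → ι, ∑ j, ∑ g : Fin (m + 1) → ι,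
      if IsPathColoring f ∧ IsPathColoring g ∧ f (Fin.last b) ≠ j ∧ j ≠ g 0 ∧
        f (Fin.last b) ≠ g 0 then colorWt x f * (x j * colorWt x g) else 0 := by
    rw [sum_fin_append]
    refine Finset.sum_congr rfl fun f _ => ?_
    rw [sum_fin_cons]
    simp only [gbull_proper_iff, colorWt_append, colorWt_cons]
  have e2 : pathSum x (b + 1 + (m + 2)) = ∑ f : Fin (b + 1) → ι, ∑ j, ∑ g : Fin (m + 1) → ι,
      if IsPathColoring f ∧ IsPathColoring g ∧ f (Fin.last b) ≠ j ∧ j ≠ g 0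
        then colorWt x f * (x j * colorWt x g) else 0 := by
    rw [pathSum, sum_fin_append]
    refine Finset.sum_congr rfl fun f _ => ?_
    rw [sum_fin_cons]
    simp only [isPathColoring_append, isPathColoring_cons, colorWt_append, colorWt_cons,
      Fin.cons_zero]
    refine Finset.sum_congr rfl fun j _ => Finset.sum_congr rfl fun g _ => ?_
    congr 1
    apply propext
    tauto
  have e3 : (∑ j, x j) * pathSum x (b + 1 + (m + 1)) =
      ∑ f : Fin (b + 1) → ι, ∑ j, ∑ g : Fin (m + 1) → ι,
      if IsPathColoring f ∧ IsPathColoring g ∧ f (Fin.last b) ≠ g 0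
        then colorWt x f * (x j * colorWt x g) else 0 := by
    rw [pathSum, sum_fin_append, Finset.mul_sum]
    refine Finset.sum_congr rfl fun f _ => ?_
    rw [Finset.sum_mul_sum]
    simp only [isPathColoring_append, colorWt_append]
    refine Finset.sum_congr rfl fun j _ => Finset.sum_congr rfl fun g _ => ?_
    rw [mul_ite, mul_zero]
    congr 1
    ring
  have e4 : pathSum x (b + 1) * pathSum x (m + 2) =
      ∑ f : Fin (b + 1) → ι, ∑ j, ∑ g : Fin (m + 1) → ι,
      if IsPathColoring f ∧ IsPathColoring g ∧ j ≠ g 0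
        then colorWt x f * (x j * colorWt x g) else 0 := by
    rw [pathSum, pathSum, sum_fin_cons (m := m + 1), Finset.sum_mul]
    refine Finset.sum_congr rfl fun f _ => ?_
    rw [Finset.mul_sum]
    simp only [Finset.mul_sum, isPathColoring_cons, colorWt_cons]
    refine Finset.sum_congr rfl fun j _ => Finset.sum_congr rfl fun g _ => ?_
    rw [ite_zero_mul_ite_zero]
    congr 1
    apply propext
    tauto
  have e5 : pathSum x (b + 1 + 1) * pathSum x (m + 1) =
      ∑ f : Fin (b + 1) → ι, ∑ j, ∑ g : Fin (m + 1) → ι,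
      if IsPathColoring f ∧ IsPathColoring g ∧ f (Fin.last b) ≠ j
        then colorWt x f * (x j * colorWt x g) else 0 := by
    rw [pathSum, pathSum, sum_fin_append, Finset.sum_mul]
    refine Finset.sum_congr rfl fun f _ => ?_
    rw [sum_fin_cons, Finset.sum_mul]
    refine Finset.sum_congr rfl fun j _ => ?_
    rw [Fintype.sum_unique, Finset.mul_sum]
    refine Finset.sum_congr rfl fun g _ => ?_
    rw [ite_zero_mul_ite_zero]
    simp only [isPathColoring_append, isPathColoring_fin_one, colorWt_append, colorWt_cons,
      Fin.cons_zero]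
    congr 1
    · apply propext
      tauto
    · simp [colorWt, mul_assoc]
  rw [e1, e2, e3, e4, e5]
  simp only [Finset.mul_sum, ← Finset.sum_add_distrib, ← Finset.sum_sub_distrib]
  refine Finset.sum_congr rfl fun f _ => Finset.sum_congr rfl fun j _ =>
    Finset.sum_congr rfl fun g _ => ?_
  by_cases hf : IsPathColoring f
  swap
  · simp [hf]
  by_cases hg : IsPathColoring g
  swap
  · simp [hg]
  simp only [hf, hg, true_and]
  by_cases h1 : f (Fin.last b) = j
  · subst h1
    by_cases h2 : f (Fin.last b) = g 0 <;> simp [h2]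
  · by_cases h2 : j = g 0
    · subst h2
      simp [h1]
    · by_cases h3 : f (Fin.last b) = g 0
      · simp [h2, h3, Ne.symm h2]
        ring
      · simp [h1, h2, h3]
        ring

end Colorings

/-! ### Truncation to finitely many variables -/

section Truncation

open Classical in
/-- The part of `f` involving only the variables `x_i` with `i < N`. -/
noncomputable def truncFun (N : ℕ) (f : SymF) : SymF :=
  fun d => if ∀ i, N ≤ i → d i = 0 then MvPowerSeries.coeff d f else 0

open Classical in
lemma coeff_truncFun (N : ℕ) (f : SymF) (d : ℕ →₀ ℕ) :
    MvPowerSeries.coeff d (truncFun N f) =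
      if ∀ i, N ≤ i → d i = 0 then MvPowerSeries.coeff d f else 0 := rfl

/-- `truncFun` as an algebra homomorphism: setting `x_i = 0` for all `i ≥ N`. -/
noncomputable def truncVars (N : ℕ) : SymF →ₐ[ℚ] SymF where
  toFun := truncFun N
  map_one' := by
    ext d
    rw [coeff_truncFun, MvPowerSeries.coeff_one]
    by_cases h : d = 0
    · simp [h]
    · simp [h]
  map_mul' f g := by
    ext d
    simp only [MvPowerSeries.coeff_mul, coeff_truncFun]
    split_ifs with h
    · refine Finset.sum_congr rfl fun p hp => ?_
      have hp' := Finset.HasAntidiagonal.mem_antidiagonal.1 hp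
      have h1 : ∀ i, N ≤ i → p.1 i = 0 ∧ p.2 i = 0 := fun i hi => by
        have := h i hi
        rw [← hp', Finsupp.add_apply] at this
        omega
      rw [if_pos fun i hi => (h1 i hi).1, if_pos fun i hi => (h1 i hi).2]
    · symm
      refine Finset.sum_eq_zero fun p hp => ?_
      have hp' := Finset.HasAntidiagonal.mem_antidiagonal.1 hp
      rw [ite_zero_mul_ite_zero, if_neg]
      rintro ⟨h1, h2⟩
      apply h
      intro i hi
      rw [← hp', Finsupp.add_apply, h1 i hi, h2 i hi]
  map_zero' := by
    ext d
    simp [coeff_truncFun]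
  map_add' f g := by
    ext d
    simp only [map_add, coeff_truncFun]
    split_ifs <;> simp
  commutes' r := by
    ext d
    rw [coeff_truncFun, MvPowerSeries.algebraMap_apply, MvPowerSeries.coeff_C]
    by_cases h : d = 0
    · simp [h]
    · simp [h]

open Classical in
lemma coeff_truncVars (N : ℕ) (f : SymF) (d : ℕ →₀ ℕ) :
    MvPowerSeries.coeff d (truncVars N f) =
      if ∀ i, N ≤ i → d i = 0 then MvPowerSeries.coeff d f else 0 := rfl

/-- Every coefficient is seen by a truncation, so truncations jointly determine a series. -/
lemma ext_truncVars {f g : SymF} (h : ∀ N, truncVars N f = truncVars N g) : f = g := by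
  ext d
  obtain ⟨N, hN⟩ : ∃ N, ∀ i, N ≤ i → d i = 0 := by
    refine ⟨d.support.sup id + 1, fun i hi => ?_⟩
    by_contra h0
    have := Finset.le_sup (f := id) (Finsupp.mem_support_iff.2 h0)
    simp only [id] at this
    omega
  have := congrArg (MvPowerSeries.coeff d) (h N)
  rwa [coeff_truncVars, coeff_truncVars, if_pos hN, if_pos hN] at this

/-- The variables `x_0, …, x_{N-1}`. -/
noncomputable def finVars (N : ℕ) (i : Fin N) : SymF := MvPowerSeries.X (i : ℕ)

/-- The exponent vector of the monomial of a coloring. -/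
noncomputable def content {V : Type*} [Fintype V] (κ : V → ℕ) : ℕ →₀ ℕ :=
  ∑ v, Finsupp.single (κ v) 1

lemma content_apply {V : Type*} [Fintype V] (κ : V → ℕ) (i : ℕ) :
    content κ i = {v | κ v = i}.ncard := by
  classical
  rw [content, Finsupp.finsetSum_apply, Set.ncard_eq_toFinset_card']
  simp [Finsupp.single_apply]

lemma colorWt_finVars {V : Type*} [Fintype V] (N : ℕ) (κ : V → Fin N) :
    colorWt (finVars N) κ = MvPowerSeries.monomial (content fun v => (κ v : ℕ)) (1 : ℚ) := by
  classical
  have h : ∀ s : Finset V, ∏ v ∈ s, finVars N (κ v) =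
      MvPowerSeries.monomial (∑ v ∈ s, Finsupp.single (κ v : ℕ) 1) (1 : ℚ) := by
    intro s
    induction s using Finset.induction_on with
    | empty => simp
    | insert a s ha ih =>
      rw [Finset.prod_insert ha, Finset.sum_insert ha, ih, finVars, MvPowerSeries.X,
        MvPowerSeries.monomial_mul_monomial, one_mul]
  exact h Finset.univ

open Classical in
lemma truncVars_csf {V : Type} [Fintype V] (G : SimpleGraph V) (N : ℕ) :
    truncVars N (csf G) = ∑ κ : V → Fin N,
      if (∀ v w, G.Adj v w → κ v ≠ κ w) then colorWt (finVars N) κ else 0 := by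
  ext d
  rw [coeff_truncVars, map_sum]
  have e : ∀ κ : V → Fin N, MvPowerSeries.coeff d
      (if (∀ v w, G.Adj v w → κ v ≠ κ w) then colorWt (finVars N) κ else 0) =
      if (∀ v w, G.Adj v w → κ v ≠ κ w) ∧ d = content (fun v => (κ v : ℕ)) then 1 else 0 := by
    intro κ
    rw [ite_and, colorWt_finVars]
    split_ifs with h1 h2
    · rw [MvPowerSeries.coeff_monomial, if_pos h2]
    · rw [MvPowerSeries.coeff_monomial, if_neg h2]
    · simp
  simp only [e, Finset.sum_boole]
  have hcoe : ∀ κ : V → ℕ, (∀ i : ℕ, {v | κ v = i}.ncard = d i) ↔ d = content κ := by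
    intro κ
    rw [DFunLike.ext_iff]
    simp only [content_apply]
    exact forall_congr' fun _ => eq_comm
  have hc : MvPowerSeries.coeff d (csf G) = (({κ : V → ℕ | (∀ v w, G.Adj v w → κ v ≠ κ w) ∧
      d = content κ}.ncard : ℕ) : ℚ) := by
    change (({κ : V → ℕ | _}.ncard : ℕ) : ℚ) = _
    simp only [hcoe]
  rw [hc]
  split_ifs with hd
  · congr 1
    symm
    rw [← Set.ncard_coe_finset]
    refine Set.ncard_congr (fun κ _ v => (κ v : ℕ)) ?_ ?_ ?_
    · intro κ hκ
      simp only [Finset.coe_filter, Finset.mem_univ, true_and, Set.mem_ofPred_eq] at hκ ⊢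
      exact ⟨fun v w h h' => hκ.1 v w h (Fin.ext h'), hκ.2⟩
    · intro κ κ' _ _ h
      ext v
      exact congrFun h v
    · rintro κ ⟨h1, h2⟩
      have hlt : ∀ v, κ v < N := by
        intro v
        by_contra hv
        have h3 := hd (κ v) (by omega)
        rw [h2, content_apply, Set.ncard_eq_zero] at h3
        exact (h3 ▸ (rfl : κ v = κ v) : v ∈ (∅ : Set V))
      refine ⟨fun v => ⟨κ v, hlt v⟩, ?_, rfl⟩
      simp only [Finset.coe_filter, Finset.mem_univ, true_and, Set.mem_ofPred_eq]
      exact ⟨fun v w h h' => h1 v w h (Fin.ext_iff.1 h'), h2⟩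
  · symm
    rw [Nat.cast_eq_zero, Finset.card_eq_zero, Finset.filter_eq_empty_iff]
    rintro κ - ⟨-, rfl⟩
    apply hd
    intro i hi
    rw [content_apply, Set.ncard_eq_zero, Set.eq_empty_iff_forall_notMem]
    intro v hv
    have := (κ v).2
    simp only [Set.mem_ofPred_eq] at hv
    omega

lemma truncVars_esymm (N k : ℕ) : truncVars N (esymm k) = finE (finVars N) k := by
  classical
  -- the exponent vector of the squarefree monomial supported on `s`
  let ind : Finset (Fin N) → ℕ →₀ ℕ := fun s => ∑ i ∈ s, Finsupp.single (i : ℕ) 1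
  have hind : ∀ (s : Finset (Fin N)) (j : ℕ),
      ind s j = if ∃ i ∈ s, (i : ℕ) = j then 1 else 0 := by
    intro s j
    simp only [ind, Finsupp.finsetSum_apply, Finsupp.single_apply]
    rw [Finset.sum_boole, Nat.cast_id]
    split_ifs with h
    · obtain ⟨i, hi, rfl⟩ := h
      rw [Finset.card_eq_one]
      refine ⟨i, ?_⟩
      ext i'
      simp only [Finset.mem_filter, Finset.mem_singleton]
      exact ⟨fun h => Fin.ext h.2, fun h => by subst h; exact ⟨hi, rfl⟩⟩
    · rw [Finset.card_eq_zero, Finset.filter_eq_empty_iff]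
      exact fun i hi h' => h ⟨i, hi, h'⟩
  have hdeg : ∀ s : Finset (Fin N), ((ind s).sum fun _ e => e) = s.card := by
    intro s
    have : ∀ f : ℕ →₀ ℕ, (f.sum fun _ e => e) = Finsupp.degree f := fun f => rfl
    rw [this]
    simp [ind, map_sum, Finsupp.degree_single]
  have hinj : Function.Injective ind := by
    intro s t h
    ext i
    have h' := DFunLike.congr_fun h (i : ℕ)
    have hm : ∀ u : Finset (Fin N), (∃ i' ∈ u, (i' : ℕ) = (i : ℕ)) ↔ i ∈ u := fun u =>
      ⟨fun ⟨i', h1, h2⟩ => Fin.ext h2 ▸ h1, fun h => ⟨i, h, rfl⟩⟩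
    rw [hind, hind] at h'
    simp only [hm] at h'
    by_cases h1 : i ∈ s <;> by_cases h2 : i ∈ t <;> simp [h1, h2] at h' ⊢
  have hmon : ∀ s : Finset (Fin N), ∏ i ∈ s, finVars N i =
      MvPowerSeries.monomial (ind s) (1 : ℚ) := by
    intro s
    induction s using Finset.induction_on with
    | empty => simp [ind]
    | insert a s ha ih =>
      simp only [ind] at ih ⊢
      rw [Finset.prod_insert ha, Finset.sum_insert ha, ih, finVars, MvPowerSeries.X,
        MvPowerSeries.monomial_mul_monomial, one_mul]
  ext d
  rw [coeff_truncVars, finE, map_sum]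
  simp only [hmon, MvPowerSeries.coeff_monomial]
  have hc : MvPowerSeries.coeff d (esymm k) =
      if (d.sum fun _ e => e) = k ∧ ∀ i, d i ≤ 1 then (1 : ℚ) else 0 := by
    change esymm k d = _
    unfold esymm
    congr
  rw [hc]
  by_cases hex : ∃ s, d = ind s
  · obtain ⟨s, rfl⟩ := hex
    have h1 : ∀ i, N ≤ i → ind s i = 0 := by
      intro i hi
      rw [hind, if_neg]
      rintro ⟨j, -, hj⟩
      have := j.2
      omega
    have h2 : ∀ i, ind s i ≤ 1 := by
      intro i
      rw [hind]
      split_ifs <;> simp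
    rw [if_pos h1]
    simp only [h2, hdeg, hinj.eq_iff, implies_true, and_true]
    rw [Finset.sum_ite_eq]
    simp [Finset.mem_powersetCard]
  · rw [Finset.sum_eq_zero fun s _ => if_neg fun h => hex ⟨s, h⟩]
    split_ifs with h1 h2
    · exfalso
      apply hex
      refine ⟨Finset.univ.filter fun i : Fin N => d i = 1, ?_⟩
      ext j
      rw [hind]
      have h3 := h2.2 j
      have h4 := h1 j
      split_ifs with h5
      · obtain ⟨i, hi, rfl⟩ := h5
        simpa using hi
      · by_contra h6
        apply h5
        have hj : j < N := by
          by_contra h7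
          exact h6 (h4 (by omega))
        exact ⟨⟨j, hj⟩, by simp only [Finset.mem_filter, Finset.mem_univ, true_and]; omega, rfl⟩
    · rfl
    · rfl

end Truncation

/-- For `a ≥ 1` and `n ≥ a + 2`, the generalized bull
`K(1^a 2 1^{n-a-2})` satisfies
`X = Σ_{I ⊨ n, i_{-1} ≥ 3, Θ_I^+(a) ≤ 1} ((i_{-1}-2)/(i_{-1}-1)) w_I e_I
 + 2 Σ_{I ⊨ n, Θ_I^+(a) ≥ 2} w_I e_I + Σ_{J ⊨ n-1, Θ_J^+(a) ≥ 2} w_J e_J e_1`. -/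
theorem stmt_17 (n a : ℕ) (ha : 1 ≤ a) (hn : a + 2 ≤ n) :
    csf (gbullG a n) =
      (∑ I : Composition n,
        if 3 ≤ I.blocks.getLastI ∧ thetaPlus I.blocks a ≤ 1 then
          ((((I.blocks.getLastI : ℚ) - 2) / ((I.blocks.getLastI : ℚ) - 1)) *
            (wC I.blocks : ℚ)) • esymmProd I.blocks
        else 0) +
      (2 : ℚ) • (∑ I : Composition n,
        if 2 ≤ thetaPlus I.blocks a then (wC I.blocks : ℚ) • esymmProd I.blocks else 0) +
      (∑ J : Composition (n - 1),
        if 2 ≤ thetaPlus J.blocks a then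
          (wC J.blocks : ℚ) • (esymmProd J.blocks * esymm 1)
        else 0) := by
  obtain ⟨b, rfl⟩ : ∃ b, a = b + 1 := ⟨a - 1, by omega⟩
  obtain ⟨m, rfl⟩ : ∃ m, n = b + 1 + (m + 2) := ⟨n - (b + 3), by omega⟩
  apply ext_truncVars
  intro N
  have hprod : ∀ l : List ℕ, truncVars N (esymmProd l) = (l.map (finE (finVars N))).prod := by
    intro l
    rw [esymmProd, map_list_prod, List.map_map]
    congr 2
    ext1 k
    exact truncVars_esymm N k
  have hE1 : finE (finVars N) 1 = ∑ j, finVars N j := by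
    simp [finE, Finset.powersetCard_one]
  have hA := compSum_rhs (e := finE (finVars N)) (finE_zero _) (a := b + 1) (c := m) ha
  have hG : truncVars N (csf (gbullG (b + 1) (b + 1 + (m + 2)))) = _ :=
    (truncVars_csf _ N).trans (by convert gbull_sum (finVars N) b m)
  rw [hG]
  simp only [pathSum_eq_compP, ← hE1]
  rw [show b + 1 + (m + 2) = b + 1 + 1 + (m + 1) by omega,
    show b + 1 + (m + 1) = b + 1 + 1 + m by omega, ← hA]
  rw [show b + 1 + 1 + (m + 1) - 1 = b + 1 + 1 + m by omega]
  simp only [map_add, map_smul, map_sum, compSum, Finset.sum_mul]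
  congr 1
  · congr 1
    · refine Finset.sum_congr rfl fun I _ => ?_
      by_cases h1 : 3 ≤ I.blocks.getLastI <;> by_cases h2 : thetaPlus I.blocks (b + 1) ≤ 1 <;>
        simp only [lastTerm, h1, h2, and_true, and_false, if_true, if_false, map_smul, hprod,
          map_zero]
    · congr 1
      refine Finset.sum_congr rfl fun I _ => ?_
      split_ifs <;> simp only [map_smul, hprod, map_zero]
  · refine Finset.sum_congr rfl fun I _ => ?_
    split_ifs
    · rw [map_smul, map_mul, hprod, truncVars_esymm, smul_mul_assoc]
    · simp
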